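/- Let A be a reduced Noetherian commutative ring and let B be an A-algebra that is flat as an A-module. Suppose that for every minimal prime ideal p of A the fiber ring B ⊗_A κ(p) is reduced, where κ(p) denotes the fraction field of the integral domain A/p. Then B is a reduced ring. -/

import Mathlib

/-!
For a flat module `M` over a reduced ring `A`, an element `x ∈ J M` with `J x = 0` vanishes: by the
equational criterion this reduces to a free module, where the coordinates of `x` lie in `J` and
hence square to zero. Consequently `Ann x` is a radical ideal, and if `p` is a minimal prime of
`Ann x` then `x ∉ p M`: otherwise `t x ∈ (Ann x) M` for some `t ∉ p`, which forces `t x = 0`.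
Any minimal prime `q ⊆ p` of `A` then has `x ∉ q M` as well, so the intersection of the `q M` over
all minimal primes of `A` is zero. By flatness `q M` is the kernel of `M → M ⊗ κ(q)`, so a flat
algebra embeds into the product of its generic fibers.
-/

section MinimalPrimes

variable {A : Type*} [CommRing A] {I p : Ideal A}

theorem exists_notMem_mul_mem_of_mem_minimalPrimes (hI : I.IsRadical) (hp : p ∈ I.minimalPrimes)
    {a : A} (ha : a ∈ p) : ∃ t ∉ p, t * a ∈ I := by
  have := hp.isPrime
  have hrad : algebraMap A (Localization.AtPrime p) a ∈
      (I.map (algebraMap A (Localization.AtPrime p))).radical := by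
    rw [IsLocalization.AtPrime.radical_map_of_mem_minimalPrimes _ p I hp]
    exact Ideal.mem_map_of_mem _ ha
  obtain ⟨n, hn⟩ := hrad
  rw [← map_pow, IsLocalization.algebraMap_mem_map_algebraMap_iff p.primeCompl] at hn
  obtain ⟨t, ht, hta⟩ := hn
  have hpow : (t * a) ^ (n + 1) = t ^ n * a * (t * a ^ n) := by ring
  exact ⟨t, ht, hI ⟨n + 1, hpow ▸ I.mul_mem_left _ hta⟩⟩

theorem exists_notMem_smul_mem_smul_of_mem_minimalPrimes {M : Type*} [AddCommMonoid M] [Module A M]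
    {N : Submodule A M} (hI : I.IsRadical) (hp : p ∈ I.minimalPrimes) {x : M} (hx : x ∈ p • N) :
    ∃ t ∉ p, t • x ∈ I • N := by
  have := hp.isPrime
  refine Submodule.smul_induction_on hx (fun a ha y hy => ?_) ?_
  · obtain ⟨t, ht, hta⟩ := exists_notMem_mul_mem_of_mem_minimalPrimes hI hp ha
    exact ⟨t, ht, smul_smul t a y ▸ Submodule.smul_mem_smul hta hy⟩
  · rintro y z ⟨s, hs, hsy⟩ ⟨t, ht, htz⟩
    refine ⟨s * t, p.primeCompl.mul_mem hs ht, ?_⟩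
    rw [smul_add]
    refine add_mem ?_ ?_
    · rw [mul_comm, mul_smul]
      exact Submodule.smul_mem _ t hsy
    · rw [mul_smul]
      exact Submodule.smul_mem _ s htz

end MinimalPrimes

section Flat

open TensorProduct

variable {A M : Type*} [CommRing A] [AddCommGroup M] [Module A M] [Module.Flat A M]

theorem tmul_eq_zero_iff_mem_torsionOf_smul_top {N : Type*} [AddCommGroup N] [Module A N]
    (m : M) (n : N) :
    m ⊗ₜ[A] n = 0 ↔ m ∈ Ideal.torsionOf A N n • (⊤ : Submodule A M) := by
  let ι : (A ⧸ Ideal.torsionOf A N n) →ₗ[A] N :=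
    (A ∙ n).subtype ∘ₗ (Ideal.quotTorsionOfEquivSpanSingleton A N n).toLinearMap
  have hι : Function.Injective ι :=
    Subtype.val_injective.comp (Ideal.quotTorsionOfEquivSpanSingleton A N n).injective
  have hmap : ι.lTensor M (m ⊗ₜ Ideal.Quotient.mk _ 1) = m ⊗ₜ n := by
    simp [ι, ← Ideal.Quotient.mk_eq_mk]
  rw [← hmap, map_eq_zero_iff _ (Module.Flat.lTensor_preserves_injective_linearMap ι hι),
    ← (tensorQuotEquivQuotSMul M (Ideal.torsionOf A N n)).map_eq_zero_iff,
    tensorQuotEquivQuotSMul_tmul_mk, one_smul, Submodule.Quotient.mk_eq_zero]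

variable [IsReduced A]

theorem sum_smul_eq_zero_of_forall_smul_eq_zero {ι : Type*} [Fintype ι] (b : ι → A) (y : ι → M)
    (h : ∀ i, b i • ∑ j, b j • y j = 0) : ∑ j, b j • y j = 0 := by
  classical
  let β : (ι → A) →ₗ[A] A := Fintype.linearCombination A b
  let η : (ι → A) →ₗ[A] M := Fintype.linearCombination A y
  have hη : η b = ∑ j, b j • y j := rfl
  have hcomp : η ∘ₗ LinearMap.toSpanSingleton A (ι → A) b ∘ₗ β = 0 := by
    ext i
    simpa [β, hη] using h i
  obtain ⟨k, α, ζ, hηα, hα⟩ := Module.Flat.exists_factorization_of_comp_eq_zero_of_free hcomp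
  have hkill (i : ι) : b i • α b = 0 := by
    simpa [β] using LinearMap.congr_fun hα (Pi.single i 1)
  have hαb : α b = 0 := by
    ext j
    have hsum : α b j = ∑ i, b i * α (fun l => if i = l then 1 else 0) j := by
      conv_lhs => rw [LinearMap.pi_apply_eq_sum_univ α b]
      simp only [Finsupp.finsetSum_apply, Finsupp.smul_apply, smul_eq_mul]
    have hkill_coord (i : ι) : b i * α b j = 0 := DFunLike.congr_fun (hkill i) j
    have hsq : α b j ^ 2 = 0 := by
      rw [sq]
      nth_rewrite 1 [hsum]
      simp only [Finset.sum_mul, mul_right_comm, hkill_coord, zero_mul, Finset.sum_const_zero]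
    exact IsReduced.eq_zero _ ⟨2, hsq⟩
  rw [← hη, hηα, LinearMap.comp_apply, hαb, map_zero]

theorem eq_zero_of_mem_smul_top_of_le_torsionOf {J : Ideal A} {x : M}
    (hx : x ∈ J • (⊤ : Submodule A M)) (hJ : J ≤ Ideal.torsionOf A M x) : x = 0 := by
  rw [← Submodule.span_univ, ← Set.range_id, Submodule.mem_ideal_smul_span_iff_exists_sum] at hx
  obtain ⟨b, hb, rfl⟩ := hx
  rw [Finsupp.sum, ← Finset.sum_coe_sort] at hJ ⊢
  exact sum_smul_eq_zero_of_forall_smul_eq_zero _ _ fun i => hJ (hb i)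

theorem isRadical_torsionOf (x : M) : (Ideal.torsionOf A M x).IsRadical := by
  rw [Ideal.isRadical_iff_pow_one_lt 2 one_lt_two]
  intro a ha
  rw [Ideal.mem_torsionOf_iff] at ha ⊢
  refine eq_zero_of_mem_smul_top_of_le_torsionOf (J := Ideal.span {a})
    (Submodule.smul_mem_smul (Ideal.mem_span_singleton_self a) Submodule.mem_top) ?_
  rwa [Ideal.span_singleton_le_iff_mem, Ideal.mem_torsionOf_iff, smul_smul, ← sq]

theorem notMem_smul_top_of_mem_minimalPrimes_torsionOf {x : M} {p : Ideal A}
    (hp : p ∈ (Ideal.torsionOf A M x).minimalPrimes) : x ∉ p • (⊤ : Submodule A M) := by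
  intro hx
  obtain ⟨t, ht, htx⟩ :=
    exists_notMem_smul_mem_smul_of_mem_minimalPrimes (isRadical_torsionOf x) hp hx
  have hle : Ideal.torsionOf A M x ≤ Ideal.torsionOf A M (t • x) := fun a ha => by
    rw [Ideal.mem_torsionOf_iff] at ha ⊢
    rw [smul_comm, ha, smul_zero]
  exact ht (hp.le (eq_zero_of_mem_smul_top_of_le_torsionOf htx hle))

theorem iInf_minimalPrimes_smul_top : ⨅ p ∈ minimalPrimes A, p • (⊤ : Submodule A M) = ⊥ := by
  rw [eq_bot_iff]
  intro x hx
  by_contra hx0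
  obtain ⟨p, hp⟩ := Ideal.nonempty_minimalPrimes (mt (Ideal.torsionOf_eq_top_iff A x).mp hx0)
  have := hp.isPrime
  obtain ⟨q, hq, hqp⟩ := Ideal.exists_minimalPrimes_le (bot_le : ⊥ ≤ p)
  have hxq : x ∈ q • (⊤ : Submodule A M) := by
    simp only [Submodule.mem_iInf] at hx
    exact hx q hq
  exact notMem_smul_top_of_mem_minimalPrimes_torsionOf hp (Submodule.smul_mono_left hqp hxq)

end Flat

theorem torsionOf_one_of_faithfulSMul_quotient {A : Type*} [CommRing A] (I : Ideal A) (S : Type*)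
    [Ring S] [Algebra A S] [Algebra (A ⧸ I) S] [IsScalarTower A (A ⧸ I) S]
    [FaithfulSMul (A ⧸ I) S] : Ideal.torsionOf A S 1 = I := by
  ext a
  rw [Ideal.mem_torsionOf_iff, ← Algebra.algebraMap_eq_smul_one,
    IsScalarTower.algebraMap_apply A (A ⧸ I) S,
    map_eq_zero_iff _ (FaithfulSMul.algebraMap_injective (A ⧸ I) S),
    Ideal.Quotient.algebraMap_eq, Ideal.Quotient.eq_zero_iff_mem]

open TensorProduct in
theorem isReduced_of_flat_of_isReduced_genericFibers_general
    {A B : Type*} [CommRing A] [IsReduced A] [CommRing B] [Algebra A B] [Module.Flat A B]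
    (h : ∀ p ∈ minimalPrimes A, IsReduced (B ⊗[A] FractionRing (A ⧸ p))) :
    IsReduced B := by
  refine ⟨fun x hx => ?_⟩
  rw [← Submodule.mem_bot A, ← iInf_minimalPrimes_smul_top]
  simp only [Submodule.mem_iInf]
  intro p hp
  have := h p hp
  have hfiber : x ⊗ₜ[A] (1 : FractionRing (A ⧸ p)) = 0 :=
    (hx.map (Algebra.TensorProduct.includeLeft : B →ₐ[A] _)).eq_zero
  rwa [tmul_eq_zero_iff_mem_torsionOf_smul_top,
    torsionOf_one_of_faithfulSMul_quotient p] at hfiber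

open TensorProduct in
/-- Let `A` be a reduced Noetherian commutative ring and `B` a flat `A`-algebra.
If for every minimal prime `p` of `A` the fiber ring `B ⊗[A] κ(p)` is reduced,
where `κ(p)` is the fraction field of `A ⧸ p`, then `B` is reduced. -/
theorem isReduced_of_flat_of_isReduced_genericFibers
    {A B : Type*} [CommRing A] [IsReduced A] [IsNoetherianRing A]
    [CommRing B] [Algebra A B] [Module.Flat A B]
    (h : ∀ p ∈ minimalPrimes A, IsReduced (B ⊗[A] FractionRing (A ⧸ p))) :
    IsReduced B :=
  isReduced_of_flat_of_isReduced_genericFibers_general h
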